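/- arXiv:1803.11202 — 3 statements merged into one kernel-verified Lean document; each statement's English description precedes it below -/
import Mathlib

section
/- Let T > 0 and let λ : ℝ → ℝ be nonnegative, integrable on [0,T), and piecewise continuous on [0,T) (continuous except at finitely many points). Then λ is constant almost everywhere on [0,T) — equivalently λ(t) = (1/T)∫_0^T λ(s) ds for almost every t ∈ [0,T) — if and only if for every integer J ≥ 0 the dyadic integrals at level J are all equal, i.e. ∫_{s_k^J} λ = ∫_{s_{k'}^J} λ for all 0 ≤ k, k' ≤ 2^J − 1. -/
open MeasureTheory Set

/-- The dyadic subinterval `s_k^j = [T k / 2^j, T (k+1) / 2^j)` of `[0, T)`. -/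
noncomputable def dyadicIco (T : ℝ) (j k : ℕ) : Set ℝ :=
  Set.Ico (T * k / 2 ^ j) (T * (k + 1) / 2 ^ j)

/-- A nonnegative, integrable, piecewise continuous intensity on `[0, T)` is constant
almost everywhere on `[0, T)` (equal a.e. to its mean value `(1/T)∫_0^T λ`) if and only
if, for every level `J ≥ 0`, all its dyadic integrals at level `J` are equal; i.e. the
point process is level `J` homogeneous for all `J ≥ 0`. -/
theorem constant_ae_iff_all_levels_homogeneous
    (T : ℝ) (hT : 0 < T) (lam : ℝ → ℝ)
    (hnn : ∀ t ∈ Set.Ico (0 : ℝ) T, 0 ≤ lam t)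
    (hint : IntegrableOn lam (Set.Ico 0 T))
    (hpc : ∃ S : Finset ℝ, ContinuousOn lam (Set.Ico 0 T \ (S : Set ℝ))) :
    (∀ᵐ t ∂(volume.restrict (Set.Ico (0 : ℝ) T)),
        lam t = (1 / T) * ∫ s in Set.Ico (0 : ℝ) T, lam s) ↔
      ∀ J : ℕ, ∀ k k' : ℕ, k ≤ 2 ^ J - 1 → k' ≤ 2 ^ J - 1 →
        (∫ t in dyadicIco T J k, lam t) = ∫ t in dyadicIco T J k', lam t := by
  have hpow : ∀ J : ℕ, (0 : ℝ) < 2 ^ J := fun J => by positivity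
  have hpowN : ∀ J : ℕ, 0 < 2 ^ J := fun J => by positivity
  have hsub : ∀ J k : ℕ, k < 2 ^ J → dyadicIco T J k ⊆ Set.Ico 0 T := by
    intro J k hk
    have hk' : (k : ℝ) + 1 ≤ 2 ^ J := by exact_mod_cast hk
    apply Set.Ico_subset_Ico
    · positivity
    · rw [div_le_iff₀ (hpow J)]
      exact mul_le_mul_of_nonneg_left hk' hT.le
  constructor
  · intro h J k k' hk hk'
    have key : ∀ k : ℕ, k ≤ 2 ^ J - 1 → (∫ t in dyadicIco T J k, lam t)
        = (T / 2 ^ J) * ((1 / T) * ∫ s in Set.Ico (0 : ℝ) T, lam s) := by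
      intro k hk
      have hlt : k < 2 ^ J := by have := hpowN J; omega
      have h2 := ae_restrict_of_ae_restrict_of_subset (hsub J k hlt) h
      rw [integral_congr_ae h2, setIntegral_const, smul_eq_mul]
      congr 1
      unfold dyadicIco
      rw [Real.volume_real_Ico_of_le]
      · ring
      · apply div_le_div_of_nonneg_right _ (hpow J).le
        nlinarith
    rw [key k hk, key k' hk']
  · intro h
    set g : ℝ → ℝ := (Set.Ico 0 T).indicator lam with hg
    have hgi : Integrable g := (integrable_indicator_iff measurableSet_Ico).2 hint
    set F : ℝ → ℝ := fun x => ∫ t in (0 : ℝ)..x, g t with hF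
    have hFc : Continuous F := intervalIntegral.continuous_primitive
      (fun a b => hgi.intervalIntegrable) 0
    have hFT : F T = ∫ s in Set.Ico (0 : ℝ) T, lam s := by
      rw [hF]
      simp only
      rw [intervalIntegral.integral_of_le hT.le, ← integral_Ico_eq_integral_Ioc]
      apply setIntegral_congr_fun measurableSet_Ico
      intro x hx
      simp [hg, hx]
    have hstep : ∀ J k : ℕ, k < 2 ^ J → F (T * (k + 1 : ℕ) / 2 ^ J) =
        F (T * k / 2 ^ J) + ∫ t in dyadicIco T J 0, lam t := by
      intro J k hk
      have hle : T * (k : ℝ) / 2 ^ J ≤ T * ((k : ℝ) + 1) / 2 ^ J := by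
        apply div_le_div_of_nonneg_right _ (hpow J).le
        nlinarith
      have e1 : (∫ t in dyadicIco T J k, lam t)
          = ∫ t in (T * (k : ℝ) / 2 ^ J)..(T * ((k : ℝ) + 1) / 2 ^ J), g t := by
        rw [intervalIntegral.integral_of_le hle, ← integral_Ico_eq_integral_Ioc]
        apply setIntegral_congr_fun measurableSet_Ico
        intro x hx
        have := hsub J k hk hx
        simp only [hg, Set.indicator_of_mem this]
      rw [h J 0 k (by omega) (by omega), e1]
      push_cast
      exact (intervalIntegral.integral_add_adjacent_intervals
        hgi.intervalIntegrable hgi.intervalIntegrable).symm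
    have hmul : ∀ J k : ℕ, k ≤ 2 ^ J → F (T * k / 2 ^ J) =
        k * ∫ t in dyadicIco T J 0, lam t := by
      intro J k
      induction k with
      | zero => intro _; simp [hF]
      | succ k ih =>
        intro hk
        rw [hstep J k (by omega), ih (by omega)]
        push_cast
        ring
    have hdy : ∀ J k : ℕ, k ≤ 2 ^ J → F (T * k / 2 ^ J) = k / 2 ^ J * F T := by
      intro J k hk
      have h1 := hmul J (2 ^ J) le_rfl
      push_cast at h1
      rw [mul_div_cancel_right₀ _ (hpow J).ne'] at h1
      rw [hmul J k hk, h1]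
      field_simp
    have hlin : ∀ x ∈ Set.Icc 0 T, F x = x / T * F T := by
      intro x hx
      have hx0 : 0 ≤ x / T := div_nonneg hx.1 hT.le
      have hx1 : x / T ≤ 1 := (div_le_one hT).2 hx.2
      have ht : Filter.Tendsto (fun J : ℕ => ((⌊x / T * 2 ^ J⌋₊ : ℕ) : ℝ) / 2 ^ J)
          Filter.atTop (nhds (x / T)) :=
        (tendsto_nat_floor_mul_div_atTop hx0).comp
          (tendsto_pow_atTop_atTop_of_one_lt (one_lt_two : (1 : ℝ) < 2))
      have ha := ht.mul_const (F T)
      have hb := (hFc.tendsto _).comp (ht.const_mul T)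
      rw [mul_div_cancel₀ _ hT.ne'] at hb
      refine tendsto_nhds_unique hb (ha.congr ?_)
      intro J
      have hk : ⌊x / T * 2 ^ J⌋₊ ≤ 2 ^ J := by
        apply Nat.floor_le_of_le
        push_cast
        nlinarith [hpow J]
      simp only [Function.comp]
      rw [← hdy J _ hk, mul_div_assoc]
    rw [← hFT]
    rw [← restrict_Ioo_eq_restrict_Ico, ae_restrict_iff' measurableSet_Ioo]
    filter_upwards [LocallyIntegrable.ae_hasDerivAt_integral hgi.locallyIntegrable] with t ht htm
    have hd : HasDerivAt F (g t) t := ht 0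
    have hd2 : HasDerivAt (fun x => x / T * F T) (1 / T * F T) t :=
      ((hasDerivAt_id t).div_const T).mul_const (F T)
    have hev : F =ᶠ[nhds t] fun x => x / T * F T := by
      filter_upwards [Icc_mem_nhds htm.1 htm.2] with x hx using hlin x hx
    have := hd.unique (hd2.congr_of_eventuallyEq hev)
    rw [← this, hg, Set.indicator_of_mem (Set.Ioo_subset_Ico_self htm)]
end

section
/- Fix an integer P ≥ 2. For each real t > 0 let Y₁(t), …, Y_P(t) be independent random variables each distributed as Poisson(t), and define R(t) = 2 ∑_{i=1}^P Y_i(t) log( P·Y_i(t) / ∑_{j=1}^P Y_j(t) ), with the conventions 0·log 0 = 0 and R(t) = 0 on the event ∑_j Y_j(t) = 0. Then, as t → ∞, the law of R(t) converges weakly (in distribution) to the chi-squared distribution with P − 1 degrees of freedom. (This is the asymptotic null distribution of the likelihood ratio statistic for equal means of P Poisson distributions; t plays the role of the product μ_c M, so the result holds even for a single realization M = 1 as μ_c → ∞.) -/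
open MeasureTheory ProbabilityTheory Filter

noncomputable def lrtPhi (u : ℝ) : ℝ :=
  if u = 0 then 1 / 2 else ((1 + u) * Real.log (1 + u) - u) / u ^ 2

lemma sq_mul_lrtPhi (u : ℝ) : u ^ 2 * lrtPhi u = (1 + u) * Real.log (1 + u) - u := by
  unfold lrtPhi
  split_ifs with h
  · simp [h]
  · field_simp

lemma continuous_lrtPhi : Continuous lrtPhi := by
  rw [continuous_iff_continuousAt]
  intro a
  have hl : Continuous fun u : ℝ => (1 + u) * Real.log (1 + u) :=
    Real.continuous_mul_log.comp (by fun_prop : Continuous fun u : ℝ => 1 + u)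
  by_cases ha : a = 0
  · subst ha
    rw [← continuousWithinAt_compl_self]
    unfold ContinuousWithinAt
    have h0 : lrtPhi 0 = 1 / 2 := by simp [lrtPhi]
    rw [h0]
    have key : Tendsto (fun u : ℝ => ((1 + u) * Real.log (1 + u) - u) / u ^ 2)
        (nhdsWithin 0 {0}ᶜ) (nhds (1 / 2)) := by
      have hne : ∀ᶠ x : ℝ in nhdsWithin 0 {0}ᶜ, 1 + x ≠ 0 := by
        apply eventually_nhdsWithin_of_eventually_nhds
        have : ContinuousAt (fun x : ℝ => 1 + x) 0 := by fun_prop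
        exact this.eventually_ne (by norm_num)
      apply HasDerivAt.lhopital_zero_nhdsNE (f' := fun x => Real.log (1 + x))
        (g' := fun x => 2 * x)
      · filter_upwards [hne] with x hx
        have h1 := (Real.hasDerivAt_mul_log hx).comp x ((hasDerivAt_id x).const_add 1)
        have h2 := h1.sub (hasDerivAt_id x)
        convert! h2 using 1
        simp
      · exact Eventually.of_forall fun x => by simpa using hasDerivAt_pow 2 x
      · filter_upwards [self_mem_nhdsWithin] with x hx
        simpa using hx
      · have : Tendsto (fun u : ℝ => (1 + u) * Real.log (1 + u) - u) (nhds 0) (nhds 0) := by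
          have h : Continuous fun u : ℝ => (1 + u) * Real.log (1 + u) - u :=
            hl.sub continuous_id
          have := h.tendsto 0
          simpa using this
        exact this.mono_left nhdsWithin_le_nhds
      · have : Tendsto (fun u : ℝ => u ^ 2) (nhds 0) (nhds 0) := by
          have := (continuous_pow 2 : Continuous fun u : ℝ => u ^ 2).tendsto 0
          simpa using this
        exact this.mono_left nhdsWithin_le_nhds
      · have h1 : HasDerivAt (fun x : ℝ => Real.log (1 + x)) 1 0 := by
          have := ((hasDerivAt_id (0 : ℝ)).const_add 1).log (by simp)
          simpa using this
        have h2 := h1.tendsto_slope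
        have h3 := h2.const_mul (1 / 2)
        rw [mul_one] at h3
        refine h3.congr' ?_
        filter_upwards [self_mem_nhdsWithin] with x hx
        simp only [slope_def_field]
        simp
        ring
    refine key.congr' ?_
    filter_upwards [self_mem_nhdsWithin] with x hx
    have : x ≠ 0 := hx
    simp [lrtPhi, this]
  · have h1 : ContinuousAt (fun u : ℝ => ((1 + u) * Real.log (1 + u) - u) / u ^ 2) a :=
      (hl.sub continuous_id).continuousAt.div (by fun_prop) (by simpa using ha)
    refine h1.congr ?_
    filter_upwards [isOpen_ne.mem_nhds ha] with x hx
    have : x ≠ 0 := hx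
    simp [lrtPhi, this]

noncomputable def lrtG (P : ℕ) (p : ℝ × (Fin P → ℝ)) : ℝ :=
  2 * (∑ i, p.2 i ^ 2 * lrtPhi (p.1 * p.2 i)
    - P * (((∑ i, p.2 i) / P) ^ 2 * lrtPhi (p.1 * ((∑ i, p.2 i) / P))))

lemma continuous_lrtG (P : ℕ) : Continuous (lrtG P) := by
  have := continuous_lrtPhi
  unfold lrtG
  fun_prop

lemma lrtG_zero (P : ℕ) (z : Fin P → ℝ) :
    lrtG P (0, z) = ∑ i, z i ^ 2 - P * ((∑ i, z i) / P) ^ 2 := by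
  simp [lrtG, lrtPhi, ← Finset.sum_mul]
  ring

lemma lrt_aux (t s a : ℝ) (ht : 0 < t) (hs : s ^ 2 * t = 1) :
    ((a - t) * s) ^ 2 * lrtPhi (s * ((a - t) * s)) = a * Real.log (a / t) - a + t := by
  have h1 : s * ((a - t) * s) = a / t - 1 := by
    field_simp
    linear_combination (a - t) * hs
  have h2 : ((a - t) * s) ^ 2 = t * (s * ((a - t) * s)) ^ 2 := by
    linear_combination -((a - t) * s) ^ 2 * hs
  rw [h2, mul_assoc, sq_mul_lrtPhi, h1]
  rw [show 1 + (a / t - 1) = a / t by ring]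
  field_simp
  ring

lemma lrtG_eq (P : ℕ) (hP : 2 ≤ P) (t s : ℝ) (ht : 0 < t) (hs : s ^ 2 * t = 1) (y : Fin P → ℕ) :
    lrtG P (s, fun i => ((y i : ℝ) - t) * s) =
      if (∑ j, y j) = 0 then 0
      else 2 * ∑ i, (y i : ℝ) * Real.log ((P : ℝ) * (y i : ℝ) / ∑ j, ((y j : ℕ) : ℝ)) := by
  have hP0 : (0 : ℝ) < P := by positivity
  set S : ℝ := ∑ j, (y j : ℝ) with hS
  have hm : (∑ i, ((y i : ℝ) - t) * s) / P = (S / P - t) * s := by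
    rw [← Finset.sum_mul, Finset.sum_sub_distrib]
    simp
    field_simp
    rw [hS]
    ring
  simp only [lrtG]
  rw [hm, lrt_aux t s (S / P) ht hs]
  simp_rw [lrt_aux t s _ ht hs]
  have hR : (if (∑ j, y j) = 0 then (0 : ℝ)
      else 2 * ∑ i, (y i : ℝ) * Real.log ((P : ℝ) * (y i : ℝ) / S))
      = 2 * ∑ i, (y i : ℝ) * Real.log ((P : ℝ) * (y i : ℝ) / S) := by
    split_ifs with h
    · have : ∀ i, y i = 0 := by simpa using h
      simp [this]
    · rfl
  rw [hR]
  have hterm : ∀ i, (y i : ℝ) * Real.log ((P : ℝ) * (y i : ℝ) / S)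
      = (y i : ℝ) * Real.log (y i / t) - y i * Real.log (S / P / t) := by
    intro i
    rcases Nat.eq_zero_or_pos (y i) with h | h
    · simp [h]
    · have hy : (0 : ℝ) < y i := by exact_mod_cast h
      have hSpos : 0 < S := lt_of_lt_of_le hy
        (Finset.single_le_sum (f := fun j => (y j : ℝ)) (fun j _ => by positivity)
          (Finset.mem_univ i))
      rw [← mul_sub, ← Real.log_div (by positivity) (by positivity)]
      congr 2
      field_simp
  simp_rw [hterm]
  simp only [Finset.sum_sub_distrib, Finset.sum_add_distrib, ← Finset.sum_mul]
  rw [← hS]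
  simp
  field_simp
  ring

lemma charFun_std_poisson (t : NNReal) (s x : ℝ) :
    charFun ((poissonMeasure t).map (fun k : ℕ => ((k : ℝ) - t) * s)) x =
      Complex.exp (t * (Complex.exp ((s * x : ℝ) * Complex.I) - 1 - (s * x : ℝ) * Complex.I)) := by
  have h := charFun_map_cast_poissonMeasure t (s * x)
  rw [charFun_apply_real, integral_map .of_discrete (by fun_prop)] at h ⊢
  rw [show (t : ℂ) * (Complex.exp ((s * x : ℝ) * Complex.I) - 1 - (s * x : ℝ) * Complex.I)
    = t * (Complex.exp ((s * x : ℝ) * Complex.I) - 1) + (-(t * (s * x : ℝ) * Complex.I)) by ring,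
    Complex.exp_add, ← h, ← integral_mul_const]
  congr 1
  ext k
  rw [← Complex.exp_add]
  congr 1
  push_cast
  ring

lemma exp_limit (x : ℝ) :
    Tendsto (fun s : ℝ => ((s ^ 2)⁻¹ : ℂ) *
      (Complex.exp ((s * x : ℝ) * Complex.I) - 1 - (s * x : ℝ) * Complex.I))
      (nhdsWithin 0 {0}ᶜ) (nhds (-(x : ℂ) ^ 2 / 2)) := by
  rw [tendsto_iff_norm_sub_tendsto_zero]
  have hb : Tendsto (fun s : ℝ => |s| * |x| ^ 3 * Real.exp |s * x|) (nhdsWithin 0 {0}ᶜ)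
      (nhds 0) := by
    have : Continuous (fun s : ℝ => |s| * |x| ^ 3 * Real.exp |s * x|) := by fun_prop
    have := this.tendsto 0
    simp only [abs_zero, zero_mul] at this
    exact this.mono_left nhdsWithin_le_nhds
  refine squeeze_zero' (Eventually.of_forall fun _ => norm_nonneg _) ?_ hb
  filter_upwards [self_mem_nhdsWithin] with s hs
  have hs0 : s ≠ 0 := hs
  have h := Complex.norm_exp_sub_sum_le_norm_mul_exp ((s * x : ℝ) * Complex.I) 3
  have hsc : (s : ℂ) ≠ 0 := by exact_mod_cast hs0
  have e : ((s ^ 2)⁻¹ : ℂ) *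
      (Complex.exp ((s * x : ℝ) * Complex.I) - 1 - (s * x : ℝ) * Complex.I) - (-(x : ℂ) ^ 2 / 2)
      = ((s ^ 2)⁻¹ : ℂ) * (Complex.exp ((s * x : ℝ) * Complex.I)
        - ∑ m ∈ Finset.range 3, ((s * x : ℝ) * Complex.I) ^ m / (m.factorial : ℂ)) := by
    simp [Finset.sum_range_succ, mul_pow, Nat.factorial]
    field_simp
    ring
  rw [e, norm_mul]
  have hn : ‖((s * x : ℝ) : ℂ) * Complex.I‖ = |s * x| := by
    rw [norm_mul, Complex.norm_I, mul_one, Complex.norm_real, Real.norm_eq_abs]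
  rw [hn] at h
  calc _ ≤ ‖((s ^ 2)⁻¹ : ℂ)‖ * (|s * x| ^ 3 * Real.exp |s * x|) := by gcongr
    _ = _ := by
      rw [norm_inv, norm_pow, Complex.norm_real, Real.norm_eq_abs, abs_mul s x]
      have : |s| ≠ 0 := by simpa using hs0
      field_simp

instance (t : NNReal) (s : ℝ) :
    IsProbabilityMeasure ((poissonMeasure t).map (fun k : ℕ => ((k : ℝ) - t) * s)) :=
  Measure.isProbabilityMeasure_map .of_discrete

noncomputable def stdPoisson (t : NNReal) (s : ℝ) : ProbabilityMeasure ℝ :=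
  ⟨(poissonMeasure t).map (fun k : ℕ => ((k : ℝ) - t) * s), inferInstance⟩

noncomputable def stdGauss : ProbabilityMeasure ℝ := ⟨gaussianReal 0 1, inferInstance⟩

lemma tendsto_invsqrt : Tendsto (fun t : NNReal => 1 / Real.sqrt t) atTop (nhds 0) := by
  simp only [one_div]
  exact (Real.tendsto_sqrt_atTop.comp (NNReal.tendsto_coe_atTop.2 tendsto_id)).inv_tendsto_atTop

lemma tendsto_stdPoisson :
    Tendsto (fun t : NNReal => stdPoisson t (1 / Real.sqrt t)) atTop (nhds stdGauss) := by
  apply tendsto_of_seq_tendsto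
  intro u hu
  apply ProbabilityMeasure.tendsto_of_tendsto_charFun
  intro x
  have h0 : charFun (stdGauss : Measure ℝ) x = Complex.exp (-(x : ℂ) ^ 2 / 2) := by
    simp only [stdGauss, ProbabilityMeasure.coe_mk]
    rw [charFun_gaussianReal]
    simp
    ring_nf
  rw [h0]
  have hpos : ∀ᶠ n in atTop, 0 < u n := hu.eventually_gt_atTop 0
  have hl : Tendsto (fun n => 1 / Real.sqrt (u n)) atTop (nhdsWithin 0 {0}ᶜ) := by
    apply tendsto_nhdsWithin_iff.2 ⟨tendsto_invsqrt.comp hu, ?_⟩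
    filter_upwards [hpos] with n hn
    have : 0 < Real.sqrt (u n) := Real.sqrt_pos.2 (by exact_mod_cast hn)
    simp [this.ne']
  have h1 := (Complex.continuous_exp.tendsto _).comp ((exp_limit x).comp hl)
  refine h1.congr' ?_
  filter_upwards [hpos] with n hn
  simp only [Function.comp, stdPoisson, ProbabilityMeasure.coe_mk]
  rw [charFun_std_poisson]
  congr 2
  rw [← Complex.ofReal_pow, ← Complex.ofReal_inv, div_pow, Real.sq_sqrt (by positivity)]
  simp


lemma pi_gauss_density (m : ℕ) :
    Measure.pi (fun _ : Fin m => gaussianReal 0 1) =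
      (volume : Measure (Fin m → ℝ)).withDensity
        (fun x => ENNReal.ofReal (∏ i, gaussianPDFReal 0 1 (x i))) := by
  symm
  symm
  apply Measure.pi_eq
  intro s hs
  rw [withDensity_apply _ (MeasurableSet.univ_pi hs), volume_pi, Measure.restrict_pi_pi,
    ← ofReal_integral_eq_lintegral_ofReal]
  · rw [integral_fintype_prod_eq_prod (fun _ x => gaussianPDFReal 0 1 x),
      ENNReal.ofReal_prod_of_nonneg]
    · congr 1 with i
      rw [gaussianReal_apply_eq_integral _ one_ne_zero]
    · intro i _
      exact integral_nonneg fun x => gaussianPDFReal_nonneg _ _ _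
  · exact Integrable.fintype_prod fun i => (integrable_gaussianPDFReal 0 1).restrict
  · exact ae_of_all _ fun x => Finset.prod_nonneg fun i _ => gaussianPDFReal_nonneg _ _ _

/-- sum of squares of `m` standard Gaussians: integral formula up to a constant. -/
lemma chi_formula (m : ℕ) (hm : 1 ≤ m) : ∃ C : ℝ, ∀ f : ℝ → ℝ,
    ∫ x, f (∑ i, x i ^ 2) ∂(Measure.pi (fun _ : Fin m => gaussianReal 0 1)) =
      C * ∫ y, f y ∂(gammaMeasure ((m : ℝ) / 2) (1 / 2)) := by
  have hm0 : (0 : ℝ) < m := by exact_mod_cast hm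
  set K : ℝ := ((Real.sqrt (2 * Real.pi))⁻¹) ^ m with hK
  have hprod : ∀ x : Fin m → ℝ, ∏ i, gaussianPDFReal 0 1 (x i)
      = K * Real.exp (-(∑ i, x i ^ 2) / 2) := by
    intro x
    simp only [gaussianPDFReal, Finset.prod_mul_distrib, ← Real.exp_sum]
    simp [hK, ← Finset.sum_div, neg_div]
  set B : ℝ := (volume : Measure (EuclideanSpace ℝ (Fin m))).real (Metric.ball 0 1)
  set r : ℝ := (1 / 2 : ℝ) ^ ((m : ℝ) / 2) / Real.Gamma (m / 2) with hr
  have hr0 : 0 < r := by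
    have := Real.Gamma_pos_of_pos (show 0 < (m : ℝ) / 2 by positivity)
    positivity
  refine ⟨m * B * K / (2 * r), fun f => ?_⟩
  have : Nontrivial (EuclideanSpace ℝ (Fin m)) := by
    have : Nonempty (Fin m) := ⟨⟨0, hm⟩⟩
    infer_instance
  have hL : ∫ x, f (∑ i, x i ^ 2) ∂(Measure.pi (fun _ : Fin m => gaussianReal 0 1))
      = m * B * ∫ y in Set.Ioi (0 : ℝ), y ^ (m - 1) * (K * Real.exp (-y ^ 2 / 2) * f (y ^ 2)) := by
    rw [pi_gauss_density, integral_withDensity_eq_integral_toReal_smul (by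
      apply Measurable.ennreal_ofReal
      exact Finset.measurable_prod _ fun i _ =>
        (measurable_gaussianPDFReal 0 1).comp (measurable_pi_apply i))
      (ae_of_all _ fun x => ENNReal.ofReal_lt_top)]
    rw [← (PiLp.volume_preserving_ofLp (Fin m)).integral_comp
      (MeasurableEquiv.toLp 2 (Fin m → ℝ)).symm.measurableEmbedding]
    have := integral_fun_norm_addHaar (volume : Measure (EuclideanSpace ℝ (Fin m)))
      (fun y : ℝ => K * Real.exp (-y ^ 2 / 2) * f (y ^ 2))
    simp only [finrank_euclideanSpace, Fintype.card_fin, nsmul_eq_mul, smul_eq_mul] at this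
    rw [mul_assoc, ← this]
    congr 1 with x
    rw [ENNReal.toReal_ofReal (Finset.prod_nonneg fun i _ => gaussianPDFReal_nonneg _ _ _),
      hprod, EuclideanSpace.real_norm_sq_eq, smul_eq_mul]
  have hG : ∫ y, f y ∂(gammaMeasure ((m : ℝ) / 2) (1 / 2))
      = ∫ y in Set.Ioi (0 : ℝ), r * y ^ ((m : ℝ) / 2 - 1) * Real.exp (-(1 / 2 * y)) * f y := by
    rw [gammaMeasure, integral_withDensity_eq_integral_toReal_smul
      (show Measurable (gammaPDF ((m : ℝ) / 2) (1 / 2)) from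
        (measurable_gammaPDFReal _ _).ennreal_ofReal)
      (ae_of_all _ fun x => ENNReal.ofReal_lt_top), ← integral_Ici_eq_integral_Ioi,
      ← integral_indicator measurableSet_Ici]
    congr 1 with y
    by_cases hy : 0 ≤ y
    · simp only [gammaPDF]
      rw [ENNReal.toReal_ofReal (gammaPDFReal_nonneg (by positivity) (by norm_num) _)]
      simp [gammaPDFReal, hy, hr]
    · simp [gammaPDF, gammaPDFReal, hy]
  rw [hL, hG, ← integral_comp_rpow_Ioi_of_pos
    (g := fun y => r * y ^ ((m : ℝ) / 2 - 1) * Real.exp (-(1 / 2 * y)) * f y)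
    (p := 2) (by norm_num), ← integral_const_mul,
    ← integral_const_mul]
  apply setIntegral_congr_fun measurableSet_Ioi
  intro y hy
  have hy0 : (0 : ℝ) < y := hy
  have e1 : (y ^ (2 : ℝ)) ^ ((m : ℝ) / 2 - 1) * y = y ^ (m - 1) := by
    rw [← Real.rpow_mul hy0.le, ← Real.rpow_natCast y (m - 1), Nat.cast_sub hm]
    nth_rewrite 2 [← Real.rpow_one y]
    rw [← Real.rpow_add hy0]
    congr 1
    push_cast
    ring
  simp only [smul_eq_mul]
  rw [← e1]
  have e2 : y ^ ((2 : ℝ) - 1) = y := by norm_num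
  rw [e2, Real.rpow_two]
  rw [show -(1 / 2 * y ^ 2) = -y ^ 2 / 2 by ring]
  field_simp

lemma chi_eq (m : ℕ) (hm : 1 ≤ m) (f : ℝ → ℝ) :
    ∫ x, f (∑ i, x i ^ 2) ∂(Measure.pi (fun _ : Fin m => gaussianReal 0 1)) =
      ∫ y, f y ∂(gammaMeasure ((m : ℝ) / 2) (1 / 2)) := by
  obtain ⟨C, hC⟩ := chi_formula m hm
  have : IsProbabilityMeasure (gammaMeasure ((m : ℝ) / 2) (1 / 2)) :=
    isProbabilityMeasure_gammaMeasure (by positivity) (by norm_num)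
  have h1 := hC (fun _ => 1)
  simp only [integral_const, probReal_univ, smul_eq_mul, mul_one] at h1
  rw [hC, ← h1, one_mul]

lemma quad_eq (m : ℕ) (hm : 1 ≤ m) (f : ℝ → ℝ) (hf : Continuous f) :
    ∫ z, f (∑ i, z i ^ 2 - (m + 1 : ℕ) * ((∑ i, z i) / (m + 1 : ℕ)) ^ 2)
      ∂(Measure.pi (fun _ : Fin (m + 1) => gaussianReal 0 1)) =
      ∫ y, f y ∂(gammaMeasure ((m : ℝ) / 2) (1 / 2)) := by
  have hpos : (0 : ℝ) < (m + 1 : ℕ) := by positivity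
  let v : EuclideanSpace ℝ (Fin (m + 1)) := WithLp.toLp 2 (fun _ => (Real.sqrt (m + 1 : ℕ))⁻¹)
  have hv : ‖v‖ = 1 := by
    have : ‖v‖ ^ 2 = 1 := by
      rw [EuclideanSpace.real_norm_sq_eq]
      simp only [v, inv_pow, Real.sq_sqrt hpos.le]
      simp
      field_simp
    have h0 := norm_nonneg v
    nlinarith
  obtain ⟨b, hb⟩ : ∃ b : OrthonormalBasis (Fin (m + 1)) ℝ
      (EuclideanSpace ℝ (Fin (m + 1))), ∀ i ∈ ({0} : Set (Fin (m + 1))),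
      b i = (fun _ => v) i := by
    apply Orthonormal.exists_orthonormalBasis_extension_of_card_eq
    · simp
    · constructor
      · intro i
        simpa using hv
      · intro i j hij
        exact absurd (Subsingleton.elim i j) hij
  have hb0 : b 0 = v := hb 0 rfl
  have hstd : (Measure.pi (fun _ : Fin (m + 1) => gaussianReal 0 1)).map (WithLp.toLp 2) =
      (Measure.pi fun _ : Fin (m + 1) ↦ gaussianReal 0 1).map (fun x ↦ ∑ i, x i • b i) := by
    rw [map_pi_eq_stdGaussian, stdGaussian_eq_map_pi_orthonormalBasis b]
  let q : EuclideanSpace ℝ (Fin (m + 1)) → ℝ := fun x => ‖x‖ ^ 2 - (inner ℝ v x) ^ 2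
  have hq : Continuous q := by fun_prop
  have hfq : Continuous fun x : EuclideanSpace ℝ (Fin (m + 1)) => f (q x) := hf.comp hq
  have h1 : ∫ z, f (∑ i, z i ^ 2 - (m + 1 : ℕ) * ((∑ i, z i) / (m + 1 : ℕ)) ^ 2)
      ∂(Measure.pi (fun _ : Fin (m + 1) => gaussianReal 0 1)) =
      ∫ x, f (q x) ∂((Measure.pi (fun _ : Fin (m + 1) => gaussianReal 0 1)).map
        (WithLp.toLp 2)) := by
    rw [integral_map (by fun_prop) hfq.aestronglyMeasurable]
    congr 1 with z
    congr 1
    simp only [q]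
    rw [EuclideanSpace.real_norm_sq_eq]
    congr 1
    simp only [v, PiLp.inner_apply]
    simp only [RCLike.inner_apply, conj_trivial]
    rw [← Finset.sum_mul, mul_pow, inv_pow, Real.sq_sqrt hpos.le]
    field_simp
  have hbm : Measurable fun x : Fin (m + 1) → ℝ => ∑ i, x i • b i :=
    Continuous.measurable (by fun_prop)
  rw [h1, hstd, integral_map hbm.aemeasurable hfq.aestronglyMeasurable]
  have h2 : ∀ x : Fin (m + 1) → ℝ, q (∑ i, x i • b i) = ∑ i : Fin m, x i.succ ^ 2 := by
    intro x
    simp only [q]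
    rw [← hb0, b.orthonormal.inner_right_fintype, ← real_inner_self_eq_norm_sq,
      b.orthonormal.inner_sum, Fin.sum_univ_succ]
    simp
    simp [pow_two]
  simp_rw [h2]
  rw [← chi_eq m hm]
  have hmp := measurePreserving_piFinSuccAbove (fun _ : Fin (m + 1) => gaussianReal 0 1) 0
  have h3 : ∫ x, f (∑ i : Fin m, x i.succ ^ 2)
      ∂(Measure.pi (fun _ : Fin (m + 1) => gaussianReal 0 1)) =
      ∫ p, f (∑ i : Fin m, p.2 i ^ 2) ∂((gaussianReal 0 1).prod
        (Measure.pi (fun _ : Fin m => gaussianReal 0 1))) := by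
    rw [← hmp.integral_comp (MeasurableEquiv.measurableEmbedding _)]
    rfl
  rw [h3, integral_fun_snd (fun x : Fin m → ℝ => f (∑ i, x i ^ 2))]
  simp

/-- Asymptotic null distribution of the likelihood ratio statistic for equal means of
`P` Poisson distributions: if `Y₁(t), …, Y_P(t)` are independent `Poisson(t)` variables
and `R(t) = 2 ∑ᵢ Yᵢ(t) log(P·Yᵢ(t)/∑ⱼ Yⱼ(t))` (with `R(t) = 0` on `∑ⱼ Yⱼ(t) = 0` and
`0·log 0 = 0`), then as `t → ∞` the law of `R(t)` converges weakly to the chi-squared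
distribution with `P − 1` degrees of freedom, i.e. the gamma distribution with shape
`(P−1)/2` and rate `1/2`. Weak convergence is expressed via integrals of bounded
continuous test functions. -/
theorem lrt_statistic_tendsto_chiSq
    (P : ℕ) (hP : 2 ≤ P)
    (ρ : (Fin P → ℕ) → ℝ)
    (hρ : ∀ y : Fin P → ℕ, ρ y =
      if (∑ j, y j) = 0 then 0
      else 2 * ∑ i, (y i : ℝ) * Real.log ((P : ℝ) * (y i : ℝ) / ∑ j, ((y j : ℕ) : ℝ)))
    (law : NNReal → Measure ℝ)
    (hlaw : ∀ t : NNReal, law t =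
      Measure.map ρ (Measure.pi fun _ : Fin P => poissonMeasure t))
    (chiSq : Measure ℝ)
    (hchi : chiSq = gammaMeasure (((P : ℝ) - 1) / 2) (1 / 2)) :
    ∀ f : BoundedContinuousFunction ℝ ℝ,
      Tendsto (fun t : NNReal => ∫ x, f x ∂(law t)) atTop (nhds (∫ x, f x ∂chiSq)) := by
  intro f
  obtain ⟨m, rfl⟩ : ∃ m, P = m + 1 := ⟨P - 1, by omega⟩
  have hm : 1 ≤ m := by omega
  have hπ : Tendsto (fun t : NNReal => ProbabilityMeasure.pi
      (fun _ : Fin (m + 1) => stdPoisson t (1 / Real.sqrt t))) atTop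
      (nhds (ProbabilityMeasure.pi (fun _ : Fin (m + 1) => stdGauss))) :=
    (ProbabilityMeasure.continuous_pi.tendsto _).comp
      (tendsto_pi_nhds.2 fun _ => tendsto_stdPoisson)
  have hd : Tendsto (fun t : NNReal => diracProba (1 / Real.sqrt t)) atTop
      (nhds (diracProba (0 : ℝ))) :=
    (continuous_diracProba.tendsto _).comp tendsto_invsqrt
  have hprod := (ProbabilityMeasure.continuous_prod.tendsto _).comp (hd.prodMk_nhds hπ)
  have hmap := ProbabilityMeasure.tendsto_map_of_tendsto_of_continuous _ _ hprod
    (continuous_lrtG (m + 1))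
  rw [ProbabilityMeasure.tendsto_iff_forall_integral_tendsto] at hmap
  have hf := hmap f
  have hGm : Measurable (lrtG (m + 1)) := (continuous_lrtG (m + 1)).measurable
  have hlim : ∫ x, f x ∂chiSq = ∫ x, f x ∂(((diracProba (0 : ℝ)).prod
      (ProbabilityMeasure.pi (fun _ : Fin (m + 1) => stdGauss))).map
        (continuous_lrtG (m + 1)).measurable.aemeasurable : Measure ℝ) := by
    have hq := quad_eq m hm f f.continuous
    rw [hchi]
    have hfG : Continuous fun p => f (lrtG (m + 1) p) := f.continuous.comp (continuous_lrtG _)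
    change _ = ∫ x, f x ∂(Measure.map (lrtG (m + 1)) ((Measure.dirac (0 : ℝ)).prod
      (Measure.pi (fun _ : Fin (m + 1) => gaussianReal 0 1))))
    rw [integral_map hGm.aemeasurable f.continuous.aestronglyMeasurable, Measure.dirac_prod,
      integral_map (by fun_prop) hfG.aestronglyMeasurable]
    simp_rw [lrtG_zero]
    rw [hq]
    congr 2
    push_cast
    ring
  rw [hlim]
  refine hf.congr' ?_
  filter_upwards [eventually_gt_atTop 0] with t ht
  have ht' : (0 : ℝ) < t := by exact_mod_cast ht
  have hs : (1 / Real.sqrt t) ^ 2 * (t : ℝ) = 1 := by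
    rw [div_pow, Real.sq_sqrt ht'.le]
    field_simp
  congr 1
  rw [hlaw]
  change Measure.map (lrtG (m + 1)) ((Measure.dirac (1 / Real.sqrt t)).prod
      (Measure.pi (fun _ : Fin (m + 1) =>
        (poissonMeasure t).map (fun k : ℕ => ((k : ℝ) - t) * (1 / Real.sqrt t))))) = _
  rw [Measure.dirac_prod, Measure.map_map hGm (by fun_prop),
    ← Measure.pi_map_pi (fun _ => .of_discrete), Measure.map_map (by fun_prop) (by fun_prop)]
  congr 1
  ext y
  rw [hρ]
  exact lrtG_eq (m + 1) hP t _ ht' hs y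
end

section
/- Let c > 0 and P ≥ 1 be given and let f^P(x₁,…,x_P) = ∑_{i=1}^P x_i log(x_i/c), with the convention 0·log 0 = 0. Consider the constraint set Ω_{c,P} = { x ∈ [0, Pc]^P : (1/P)∑_{i=1}^P x_i = c }. Then for every x ∈ Ω_{c,P} one has f^P(x) ≤ Pc·log P, and this maximum is attained exactly by the elements of Ω_{c,P} of the form (0, …, 0, Pc, 0, …, 0) (the vectors with one coordinate equal to Pc and all others zero). -/
open Set

/-- Maximizers of `f^P(x) = ∑ᵢ xᵢ log(xᵢ/c)` over the constraint set
`Ω_{c,P} = {x ∈ [0, Pc]^P : (1/P)∑ᵢ xᵢ = c}`: the maximum value is `Pc·log P`, attained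
exactly at the vectors with one coordinate equal to `Pc` and all others zero (the
convention `0·log 0 = 0` holds automatically since `Real.log 0 = 0`). -/
theorem max_of_lrt_entropy_sum
    (c : ℝ) (hc : 0 < c) (P : ℕ) (hP : 1 ≤ P)
    (f : (Fin P → ℝ) → ℝ)
    (hf : ∀ x : Fin P → ℝ, f x = ∑ i, x i * Real.log (x i / c))
    (Ω : Set (Fin P → ℝ))
    (hΩ : Ω = {x : Fin P → ℝ |
      (∀ i, x i ∈ Set.Icc (0 : ℝ) ((P : ℝ) * c)) ∧ (∑ i, x i) / (P : ℝ) = c}) :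
    (∀ x ∈ Ω, f x ≤ (P : ℝ) * c * Real.log P) ∧
      (∀ x ∈ Ω, (f x = (P : ℝ) * c * Real.log P ↔
        ∃ i, x i = (P : ℝ) * c ∧ ∀ j, j ≠ i → x j = 0)) := by
  have hP0 : (0 : ℝ) < P := by exact_mod_cast hP
  have hPc : (0 : ℝ) < P * c := mul_pos hP0 hc
  have term : ∀ t : ℝ, 0 ≤ t → t ≤ P * c → t * Real.log (t / c) ≤ t * Real.log P := by
    intro t h0 h1
    rcases h0.eq_or_lt with h | h
    · simp [← h]
    · apply mul_le_mul_of_nonneg_left _ h0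
      apply Real.log_le_log (div_pos h hc)
      rwa [div_le_iff₀ hc]
  have termeq : ∀ t : ℝ, 0 ≤ t → t * Real.log (t / c) = t * Real.log P →
      t = 0 ∨ t = P * c := by
    intro t h0 h1
    rcases h0.eq_or_lt with h | h
    · exact Or.inl h.symm
    · right
      have h2 := mul_left_cancel₀ h.ne' h1
      have h3 := Real.log_injOn_pos (Set.mem_Ioi.2 (div_pos h hc)) (Set.mem_Ioi.2 hP0) h2
      rwa [div_eq_iff hc.ne'] at h3
  have key : ∀ x ∈ Ω, (∀ i, 0 ≤ x i) ∧ (∀ i, x i ≤ P * c) ∧ ∑ i, x i = P * c ∧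
      (P : ℝ) * c * Real.log P = ∑ i, x i * Real.log P := by
    intro x hx
    rw [hΩ] at hx
    obtain ⟨hb, hs⟩ := hx
    rw [div_eq_iff hP0.ne'] at hs
    have hs' : ∑ i, x i = P * c := by rw [hs, mul_comm]
    exact ⟨fun i => (hb i).1, fun i => (hb i).2, hs', by rw [← Finset.sum_mul, hs']⟩
  refine ⟨?_, ?_⟩
  · intro x hx
    obtain ⟨h0, h1, -, h3⟩ := key x hx
    rw [hf, h3]
    exact Finset.sum_le_sum fun i _ => term _ (h0 i) (h1 i)
  · intro x hx
    obtain ⟨h0, h1, h2, h3⟩ := key x hx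
    rw [hf]
    constructor
    · intro h
      rw [h3, Finset.sum_eq_sum_iff_of_le fun i _ => term _ (h0 i) (h1 i)] at h
      have hall : ∀ i, x i = 0 ∨ x i = P * c := fun i =>
        termeq _ (h0 i) (h i (Finset.mem_univ i))
      have hex : ∃ i, x i ≠ 0 := by
        by_contra! hne
        simp [hne] at h2
        rcases h2 with h2 | h2
        · omega
        · exact hc.ne' h2
      obtain ⟨i, hi⟩ := hex
      have hi' := (hall i).resolve_left hi
      refine ⟨i, hi', fun j hj => ?_⟩
      rw [← Finset.add_sum_erase _ _ (Finset.mem_univ i), hi'] at h2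
      have h4 : ∑ k ∈ Finset.univ.erase i, x k = 0 := by linarith
      exact (Finset.sum_eq_zero_iff_of_nonneg fun k _ => h0 k).1 h4 j (by simp [hj])
    · rintro ⟨i, hi, hj⟩
      rw [Finset.sum_eq_single i (fun j _ hji => by simp [hj j hji]) (by simp), hi,
        mul_div_cancel_right₀ _ hc.ne']
end
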